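/- For every integer k ≥ 4, the ordered k-uniform matching on vertex set {1,...,2k} with the two edges A = {1,...,⌊k/2⌋} ∪ {k+1,...,k+⌈k/2⌉} and B = {1,...,2k} \ A is not k-nestable. -/

import Mathlib

/-- The support (vertex set) of a set of edges: the union of the edges. -/
def edgeSupport (E : Finset (Finset ℕ)) : Finset ℕ := E.sup id

/-- A set of edges `E` (of an ordered `k`-uniform matching) is `k`-nestable:  either it
is empty, or there are `k` disjoint consecutive intervals `I 0 < I 1 < ⋯ < I (k-1)` of
the support (some possibly empty or degenerate) spanning the support, the first
containing the least vertex and the last containing the greatest vertex, such that every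
edge is either contained in one of the intervals or has exactly one vertex in each
interval, and for each `j` the set of edges contained in `I j` is itself `k`-nestable. -/
inductive KNestable (k : ℕ) : Finset (Finset ℕ) → Prop where
  | empty : KNestable k ∅
  | nest (E : Finset (Finset ℕ)) (hk : 0 < k) (I : Fin k → Finset ℕ)
      (hord : ∀ j j' : Fin k, j < j' → ∀ x ∈ I j, ∀ y ∈ I j', x < y)
      (hspan : edgeSupport E = Finset.univ.biUnion fun j => I j)
      (hint : ∀ j : Fin k, ∀ x ∈ I j, ∀ y ∈ I j, ∀ z ∈ edgeSupport E,
        x ≤ z → z ≤ y → z ∈ I j)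
      (hfirst : ∀ x ∈ edgeSupport E, ∃ y ∈ I ⟨0, hk⟩, y ≤ x)
      (hlast : ∀ x ∈ edgeSupport E, ∃ y ∈ I ⟨k - 1, Nat.sub_lt hk Nat.one_pos⟩, x ≤ y)
      (hedges : ∀ A ∈ E, (∃ j, A ⊆ I j) ∨ ∀ j, (A ∩ I j).card = 1)
      (hrec : ∀ j : Fin k, KNestable k (E.filter fun A => A ⊆ I j)) :
      KNestable k E

/-!
Write the vertices of `A` and `B` in order: two runs of `A` alternate with two runs of `B`, and
each run has at least two vertices. Suppose intervals as in the definition of nestability exist.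
An edge with two vertices in one of the intervals is contained in it. If `B` is contained in an
interval, that interval is the last one, and it swallows the second run of `A`, hence all of `A`,
including the least vertex, which belongs to the first interval. Otherwise `B` meets the first
interval, which therefore swallows the first run of `A`, hence all of `A`, hence the first run of
`B`, hence all of `B`, including the greatest vertex, which belongs to the last interval.
-/

theorem subset_edgeSupport {E : Finset (Finset ℕ)} {C : Finset ℕ} (hC : C ∈ E) :
    C ⊆ edgeSupport E :=
  Finset.le_sup (f := id) hC

theorem edgeSupport_pair (A B : Finset ℕ) : edgeSupport {A, B} = A ∪ B := by
  simp [edgeSupport]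

/-- One level of the recursion defining `KNestable`: pairwise disjoint intervals of the vertices
of `E` such that every edge is contained in one of them or has exactly one vertex in each. The
order of the intervals is not recorded, so the index type `ι` is arbitrary. -/
structure IsNesting {ι : Type*} (E : Finset (Finset ℕ)) (I : ι → Finset ℕ) : Prop where
  pairwise_disjoint : Pairwise (Function.onFun Disjoint I)
  mem_of_le_of_le : ∀ j, ∀ x ∈ I j, ∀ y ∈ I j, ∀ z ∈ edgeSupport E, x ≤ z → z ≤ y → z ∈ I j
  subset_or_card_inter_eq_one : ∀ C ∈ E, (∃ j, C ⊆ I j) ∨ ∀ j, (C ∩ I j).card = 1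

namespace IsNesting

variable {ι : Type*} {E : Finset (Finset ℕ)} {I : ι → Finset ℕ} {C : Finset ℕ} {i j : ι}
  {x y u v : ℕ}

theorem eq_of_mem (hI : IsNesting E I) (hi : x ∈ I i) (hj : x ∈ I j) : i = j :=
  hI.pairwise_disjoint.eq (Finset.not_disjoint_iff.2 ⟨x, hi, hj⟩)

theorem subset_of_mem_of_mem (hI : IsNesting E I) (hC : C ∈ E) (huv : u ≠ v) (huC : u ∈ C)
    (hvC : v ∈ C) (hu : u ∈ I j) (hv : v ∈ I j) : C ⊆ I j := by
  rcases hI.subset_or_card_inter_eq_one C hC with ⟨i, hCi⟩ | hcard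
  · rwa [hI.eq_of_mem hu (hCi huC)]
  · exact absurd (Finset.card_le_one.1 (hcard j).le u (Finset.mem_inter.2 ⟨huC, hu⟩) v
      (Finset.mem_inter.2 ⟨hvC, hv⟩)) huv

theorem subset_of_le_of_lt_of_le (hI : IsNesting E I) (hC : C ∈ E) (huC : u ∈ C) (hvC : v ∈ C)
    (hx : x ∈ I j) (hy : y ∈ I j) (hxu : x ≤ u) (huv : u < v) (hvy : v ≤ y) : C ⊆ I j := by
  have hu : u ∈ I j :=
    hI.mem_of_le_of_le j x hx y hy u (subset_edgeSupport hC huC) hxu (huv.le.trans hvy)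
  have hv : v ∈ I j :=
    hI.mem_of_le_of_le j x hx y hy v (subset_edgeSupport hC hvC) (hxu.trans huv.le) hvy
  exact hI.subset_of_mem_of_mem hC huv.ne huC hvC hu hv

end IsNesting

theorem KNestable.exists_isNesting {k : ℕ} {E : Finset (Finset ℕ)} {m M : ℕ} (hk : 2 ≤ k)
    (h : KNestable k E) (hm : IsLeast (edgeSupport E : Set ℕ) m)
    (hM : IsGreatest (edgeSupport E : Set ℕ) M) :
    ∃ I : Fin k → Finset ℕ, IsNesting E I ∧ ∃ i j, i ≠ j ∧ m ∈ I i ∧ M ∈ I j := by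
  cases h with
  | empty => exact absurd hm.1 (by simp [edgeSupport])
  | nest _ hk₀ I hord hspan hint hfirst hlast hedges _ =>
    have hsub (j : Fin k) : I j ⊆ edgeSupport E :=
      hspan ▸ Finset.subset_biUnion_of_mem I (Finset.mem_univ j)
    have hdisj : Pairwise (Function.onFun Disjoint I) :=
      (pairwise_disjoint_on I).2 fun i j hij =>
        Finset.disjoint_left.2 fun x hi hj => (hord i j hij x hi x hj).false
    obtain ⟨x, hx, hxm⟩ := hfirst m hm.1
    obtain ⟨y, hy, hMy⟩ := hlast M hM.1
    have hxm : x = m := hxm.antisymm (hm.2 (hsub _ hx))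
    have hyM : y = M := (hM.2 (hsub _ hy)).antisymm hMy
    exact ⟨I, ⟨hdisj, hint, hedges⟩, _, _, Fin.ne_of_val_ne (by dsimp only; omega),
      hxm ▸ hx, hyM ▸ hy⟩

theorem not_kNestable_of_interleaved {k : ℕ} {E : Finset (Finset ℕ)} {A B : Finset ℕ}
    {a₁ a₂ b₁ b₂ a₃ a₄ b₃ : ℕ} (hk : 2 ≤ k) (hA : A ∈ E) (hB : B ∈ E)
    (ha₁ : a₁ ∈ A) (ha₂ : a₂ ∈ A) (hb₂ : b₂ ∈ B) (ha₃ : a₃ ∈ A) (ha₄ : a₄ ∈ A) (hb₃ : b₃ ∈ B)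
    (ha₁_least : IsLeast (edgeSupport E : Set ℕ) a₁) (hb₁_least : IsLeast (B : Set ℕ) b₁)
    (hb₃_greatest : IsGreatest (edgeSupport E : Set ℕ) b₃)
    (ha₁a₂ : a₁ < a₂) (ha₂b₁ : a₂ < b₁) (hb₁b₂ : b₁ < b₂) (hb₂a₃ : b₂ < a₃) (ha₃a₄ : a₃ < a₄) :
    ¬ KNestable k E := by
  intro h
  obtain ⟨I, hI, i, j, hij, hi, hj⟩ := h.exists_isNesting hk ha₁_least hb₃_greatest
  have hb₁ : b₁ ∈ B := hb₁_least.1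
  rcases hI.subset_or_card_inter_eq_one B hB with ⟨j', hBj'⟩ | hcard
  · have hBj : B ⊆ I j := hI.eq_of_mem (hBj' hb₃) hj ▸ hBj'
    have hAj : A ⊆ I j := hI.subset_of_le_of_lt_of_le hA ha₃ ha₄ (hBj hb₁) hj
      (hb₁b₂.trans hb₂a₃).le ha₃a₄ (hb₃_greatest.2 (subset_edgeSupport hA ha₄))
    exact hij (hI.eq_of_mem hi (hAj ha₁))
  · obtain ⟨b, hb⟩ : (B ∩ I i).Nonempty := Finset.card_pos.1 (hcard i ▸ one_pos)
    obtain ⟨hbB, hbi⟩ := Finset.mem_inter.1 hb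
    have hAi : A ⊆ I i := hI.subset_of_le_of_lt_of_le hA ha₁ ha₂ hi hbi
      le_rfl ha₁a₂ (ha₂b₁.le.trans (hb₁_least.2 hbB))
    have hBi : B ⊆ I i := hI.subset_of_le_of_lt_of_le hB hb₁ hb₂ hi (hAi ha₃)
      (ha₁a₂.trans ha₂b₁).le hb₁b₂ hb₂a₃.le
    exact hij (hI.eq_of_mem (hBi hb₃) hj)

/-- For `k ≥ 4`, the ordered `k`-uniform matching on `{1, …, 2k}`
with the two edges `A = {1, …, ⌊k/2⌋} ∪ {k+1, …, k+⌈k/2⌉}` and `B = {1, …, 2k} \ A` is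
not `k`-nestable. -/
theorem interleaved_matching_not_nestable (k : ℕ) (hk : 4 ≤ k) :
    ¬ KNestable k
        ({Finset.Icc 1 (k / 2) ∪ Finset.Icc (k + 1) (k + (k + 1) / 2),
          Finset.Icc 1 (2 * k) \
            (Finset.Icc 1 (k / 2) ∪ Finset.Icc (k + 1) (k + (k + 1) / 2))} :
          Finset (Finset ℕ)) := by
  set A := Finset.Icc 1 (k / 2) ∪ Finset.Icc (k + 1) (k + (k + 1) / 2) with hA
  set B := Finset.Icc 1 (2 * k) \ A with hB
  have mem_A (x : ℕ) : x ∈ A ↔ 1 ≤ x ∧ x ≤ k / 2 ∨ k + 1 ≤ x ∧ x ≤ k + (k + 1) / 2 := by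
    simp [hA]
  have mem_B (x : ℕ) :
      x ∈ B ↔ k / 2 + 1 ≤ x ∧ x ≤ k ∨ k + (k + 1) / 2 + 1 ≤ x ∧ x ≤ 2 * k := by
    rw [hB, Finset.mem_sdiff, Finset.mem_Icc, mem_A]
    omega
  have support_eq : (edgeSupport {A, B} : Set ℕ) = Set.Icc 1 (2 * k) := by
    ext x
    rw [edgeSupport_pair, Finset.mem_coe, Finset.mem_union, mem_A, mem_B, Set.mem_Icc]
    omega
  have least_B : IsLeast (B : Set ℕ) (k / 2 + 1) :=
    ⟨(mem_B _).2 (by omega), fun x hx => by have := (mem_B x).1 hx; omega⟩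
  exact not_kNestable_of_interleaved (by omega) (by simp) (by simp)
    ((mem_A 1).2 (by omega)) ((mem_A 2).2 (by omega)) ((mem_B (k / 2 + 2)).2 (by omega))
    ((mem_A (k + 1)).2 (by omega)) ((mem_A (k + 2)).2 (by omega)) ((mem_B (2 * k)).2 (by omega))
    (support_eq ▸ isLeast_Icc (by omega)) least_B (support_eq ▸ isGreatest_Icc (by omega))
    (by omega) (by omega) (by omega) (by omega) (by omega)
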